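/- arXiv:1904.08698 — 10 statements merged into one kernel-verified Lean document; each statement's English description precedes it below -/
import Mathlib

section
/- Let n ≥ 2 be a natural number and let δ, ε, C be positive real numbers. Let h : ℝ → ℝ be continuous with h(s) > 0 for all s ≥ ε, and suppose h is integrable on [ε, ∞) with C · ∫_ε^∞ h(s) ds > 4δ + (n + 4δ(ε+1) − 1)/ε. Then there do not exist functions m, φ : ℝ → ℝ such that φ is differentiable on [ε, ∞) with φ'(t) ≤ −m(t)²/(n−1) − C·h(t) for all t ≥ ε, φ(t) ≥ −4δ for all t ≥ ε, and φ(ε) ≤ (n + 4δ(ε+1) − 1)/ε. -/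
open MeasureTheory Set

/-- Analytic core of Theorem 1.5: the Riccati inequality for the f-mean curvature `φ`,
together with the two-sided comparison bounds, contradicts
`C · ∫_ε^∞ h > 4δ + (n + 4δ(ε+1) − 1)/ε`. -/
theorem stmt_0 (n : ℕ) (hn : 2 ≤ n) (δ ε C : ℝ) (hδ : 0 < δ) (hε : 0 < ε) (hC : 0 < C)
    (h : ℝ → ℝ) (hcont : Continuous h) (hpos : ∀ s, ε ≤ s → 0 < h s)
    (hint : IntegrableOn h (Ici ε))
    (hbig : 4 * δ + ((n : ℝ) + 4 * δ * (ε + 1) - 1) / ε < C * ∫ s in Ici ε, h s) :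
    ¬ ∃ m φ φ' : ℝ → ℝ,
      (∀ t ∈ Ici ε, HasDerivWithinAt φ (φ' t) (Ici ε) t) ∧
      (∀ t, ε ≤ t → φ' t ≤ -(m t) ^ 2 / ((n : ℝ) - 1) - C * h t) ∧
      (∀ t, ε ≤ t → -(4 * δ) ≤ φ t) ∧
      φ ε ≤ ((n : ℝ) + 4 * δ * (ε + 1) - 1) / ε := by
  rintro ⟨m, φ, φ', hd, hR, hlow, hup⟩
  have hn1 : (0 : ℝ) < (n : ℝ) - 1 := by
    have : (2 : ℝ) ≤ n := by exact_mod_cast hn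
    linarith
  have hder : ∀ t ∈ Ici ε, HasDerivWithinAt (fun t => φ t + C * ∫ s in ε..t, h s)
      (φ' t + C * h t) (Ici ε) t := by
    intro t ht
    exact (hd t ht).add
      (((hcont.integral_hasStrictDerivAt ε t).hasDerivAt.const_mul C).hasDerivWithinAt)
  have hanti : AntitoneOn (fun t => φ t + C * ∫ s in ε..t, h s) (Ici ε) := by
    refine antitoneOn_of_hasDerivWithinAt_nonpos (convex_Ici ε)
      (fun t ht => (hder t ht).continuousWithinAt)
      (fun t ht => (hder t (interior_subset ht)).mono interior_subset) ?_
    intro t ht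
    have h1 := hR t (interior_subset ht)
    have h2 : 0 ≤ (m t) ^ 2 / ((n : ℝ) - 1) := by positivity
    rw [neg_div] at h1
    linarith
  have hbound : ∀ t, ε ≤ t → C * ∫ s in ε..t, h s
      ≤ 4 * δ + ((n : ℝ) + 4 * δ * (ε + 1) - 1) / ε := by
    intro t ht
    have h1 := hanti (self_mem_Ici) (show t ∈ Ici ε from ht) ht
    have h2 := hlow t ht
    simp only [intervalIntegral.integral_same, mul_zero, add_zero] at h1
    linarith
  have hlim := (intervalIntegral_tendsto_integral_Ioi ε
    (hint.mono_set Ioi_subset_Ici_self) Filter.tendsto_id).const_mul C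
  rw [integral_Ici_eq_integral_Ioi] at hbig
  refine absurd (le_of_tendsto hlim ?_) (not_le.mpr hbig)
  filter_upwards [Filter.eventually_ge_atTop ε] with t ht using hbound t ht
end

section
/- Let n ≥ 2 be a natural number, a ≥ 0, and let ε, C be positive real numbers. Let h : ℝ → ℝ be continuous with h(s) > 0 for all s ≥ ε, and suppose h is integrable on [ε, ∞) with C · ∫_ε^∞ h(s) ds > 2a + (n−1)/ε. Then there do not exist functions m, φ : ℝ → ℝ such that φ is differentiable on [ε, ∞) with φ'(t) ≤ −m(t)²/(n−1) − C·h(t) for all t ≥ ε, φ(t) ≥ −a for all t ≥ ε, and φ(ε) ≤ (n−1)/ε + a. -/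
open MeasureTheory Set

/-- Analytic core of Theorem 1.7: the Riccati inequality for the f-mean curvature `φ`,
together with the comparison bounds under `∂_t f ≥ −a`, contradicts
`C · ∫_ε^∞ h > 2a + (n−1)/ε`. -/
theorem stmt_1 (n : ℕ) (hn : 2 ≤ n) (a ε C : ℝ) (ha : 0 ≤ a) (hε : 0 < ε) (hC : 0 < C)
    (h : ℝ → ℝ) (hcont : Continuous h) (hpos : ∀ s, ε ≤ s → 0 < h s)
    (hint : IntegrableOn h (Ici ε))
    (hbig : 2 * a + ((n : ℝ) - 1) / ε < C * ∫ s in Ici ε, h s) :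
    ¬ ∃ m φ φ' : ℝ → ℝ,
      (∀ t ∈ Ici ε, HasDerivWithinAt φ (φ' t) (Ici ε) t) ∧
      (∀ t, ε ≤ t → φ' t ≤ -(m t) ^ 2 / ((n : ℝ) - 1) - C * h t) ∧
      (∀ t, ε ≤ t → -a ≤ φ t) ∧
      φ ε ≤ ((n : ℝ) - 1) / ε + a := by
  rintro ⟨m, φ, φ', hd, hle, hlow, hini⟩
  have hn1 : (0 : ℝ) ≤ (n : ℝ) - 1 := by
    have : (2 : ℝ) ≤ n := by exact_mod_cast hn
    linarith
  have key : ∀ t, ε ≤ t → C * ∫ s in ε..t, h s ≤ 2 * a + ((n : ℝ) - 1) / ε := by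
    intro t ht
    have h1 : φ t - φ ε ≤ ∫ s in ε..t, (-C) * h s := by
      refine intervalIntegral.sub_le_integral_of_hasDeriv_right_of_le (g' := φ') ht ?_ ?_ ?_ ?_
      · intro x hx
        exact (hd x hx.1).continuousWithinAt.mono Icc_subset_Ici_self
      · intro x hx
        exact (hd x hx.1.le).mono (fun y hy => le_trans hx.1.le (le_of_lt hy))
      · exact (continuous_const.mul hcont).continuousOn.integrableOn_Icc
      · intro x hx
        have h2 := hle x hx.1.le
        have h3 : -(m x) ^ 2 / ((n : ℝ) - 1) ≤ 0 :=
          div_nonpos_of_nonpos_of_nonneg (neg_nonpos.mpr (sq_nonneg _)) hn1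
        linarith
    rw [intervalIntegral.integral_const_mul] at h1
    have h4 := hlow t ht
    linarith
  rw [integral_Ici_eq_integral_Ioi] at hbig
  have hlim := (intervalIntegral_tendsto_integral_Ioi ε (hint.mono_set Ioi_subset_Ici_self)
    Filter.tendsto_id).const_mul C
  have := le_of_tendsto hlim
    ((Filter.eventually_ge_atTop ε).mono fun t ht => key t ht)
  linarith
end

section
/- Let n ≥ 2 be a natural number, k > 0 a real number, and let ε, C be positive real numbers. Let h : ℝ → ℝ be continuous with h(s) > 0 for all s ≥ ε, and suppose h is integrable on [ε, ∞) with C · ∫_ε^∞ h(s) ds > (n + k − 1)/ε. Then there does not exist a function φ : ℝ → ℝ that is differentiable on [ε, ∞) with φ'(t) ≤ −φ(t)²/(n+k−1) − C·h(t) for all t ≥ ε, φ(t) ≥ 0 for all t ≥ ε, and φ(ε) ≤ (n + k − 1)/ε. -/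
open MeasureTheory Set

/-- Analytic core of Theorem 1.9: the Riccati inequality for the f-mean curvature `φ`
in terms of the k-Bakry–Emery Ricci tensor, together with the comparison bounds,
contradicts `C · ∫_ε^∞ h > (n + k − 1)/ε`. -/
theorem stmt_2 (n : ℕ) (hn : 2 ≤ n) (k ε C : ℝ) (hk : 0 < k) (hε : 0 < ε) (hC : 0 < C)
    (h : ℝ → ℝ) (hcont : Continuous h) (hpos : ∀ s, ε ≤ s → 0 < h s)
    (hint : IntegrableOn h (Ici ε))
    (hbig : ((n : ℝ) + k - 1) / ε < C * ∫ s in Ici ε, h s) :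
    ¬ ∃ φ φ' : ℝ → ℝ,
      (∀ t ∈ Ici ε, HasDerivWithinAt φ (φ' t) (Ici ε) t) ∧
      (∀ t, ε ≤ t → φ' t ≤ -(φ t) ^ 2 / ((n : ℝ) + k - 1) - C * h t) ∧
      (∀ t, ε ≤ t → 0 ≤ φ t) ∧
      φ ε ≤ ((n : ℝ) + k - 1) / ε := by
  rintro ⟨φ, φ', hd, hric, hnn, hinit⟩
  have hN : 0 < (n : ℝ) + k - 1 := by
    have : (2 : ℝ) ≤ n := by exact_mod_cast hn
    linarith
  have key : ∀ T, ε ≤ T → ∫ s in ε..T, C * h s ≤ ((n : ℝ) + k - 1) / ε := by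
    intro T hT
    have h1 : φ T - φ ε ≤ ∫ s in ε..T, -(C * h s) := by
      refine intervalIntegral.sub_le_integral_of_hasDeriv_right_of_le hT (g' := φ') ?_ ?_ ?_ ?_
      · intro t ht
        exact ((hd t ht.1).continuousWithinAt).mono Icc_subset_Ici_self
      · intro t ht
        exact (hd t ht.1.le).mono (fun x hx => (ht.1.trans hx).le)
      · exact (by fun_prop : Continuous fun s => -(C * h s)).continuousOn.integrableOn_Icc
      · intro t ht
        have h2 := hric t ht.1.le
        have h3 : 0 ≤ (φ t) ^ 2 / ((n : ℝ) + k - 1) := by positivity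
        rw [neg_div] at h2
        linarith
    rw [intervalIntegral.integral_neg] at h1
    linarith [hnn T hT]
  rw [integral_Ici_eq_integral_Ioi, ← integral_const_mul] at hbig
  have hlim := intervalIntegral_tendsto_integral_Ioi (f := fun s => C * h s) ε
    ((hint.mono_set Ioi_subset_Ici_self).const_mul C) Filter.tendsto_id
  have := le_of_tendsto hlim ((Filter.eventually_ge_atTop ε).mono fun T hT => key T hT)
  linarith
end

section
/- Let n ≥ 2 be a natural number, a ≥ 0, r₀ > 0, b > 2, and let C be a real number with C > (2a·r₀ + (n−1)(b−2))·r₀^{b−2}·(b−1)^b/(b−2)^{b−1}. Then there do not exist functions m, φ : ℝ → ℝ such that φ is differentiable on (0, ∞) with φ'(t) ≤ −m(t)²/(n−1) − C·(r₀+t)^{−b} for all t > 0, and −a ≤ φ(t) ≤ (n−1)/t + a for all t > 0. -/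
open MeasureTheory Set

/-- Analytic core of Corollary 1.8 for `b > 2`: the Riccati inequality with
`h(t) = (r₀+t)^{−b}` on `(0, ∞)` and the bounds `−a ≤ φ(t) ≤ (n−1)/t + a` contradict
`C > (2ar₀ + (n−1)(b−2))·r₀^{b−2}·(b−1)^b/(b−2)^{b−1}`. -/
theorem stmt_5 (n : ℕ) (hn : 2 ≤ n) (a r₀ b C : ℝ) (ha : 0 ≤ a) (hr₀ : 0 < r₀) (hb : 2 < b)
    (hC : (2 * a * r₀ + ((n : ℝ) - 1) * (b - 2)) * r₀ ^ (b - 2) * (b - 1) ^ b / (b - 2) ^ (b - 1)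
      < C) :
    ¬ ∃ m φ φ' : ℝ → ℝ,
      (∀ t ∈ Ioi (0 : ℝ), HasDerivAt φ (φ' t) t) ∧
      (∀ t, 0 < t → φ' t ≤ -(m t) ^ 2 / ((n : ℝ) - 1) - C * (r₀ + t) ^ (-b)) ∧
      (∀ t, 0 < t → -a ≤ φ t ∧ φ t ≤ ((n : ℝ) - 1) / t + a) := by
  rintro ⟨m, φ, φ', hd, hR, hB⟩
  have hn1 : (0 : ℝ) < (n : ℝ) - 1 := by
    have : (2 : ℝ) ≤ n := by exact_mod_cast hn
    linarith
  have hb1 : 0 < b - 1 := by linarith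
  have hb2 : 0 < b - 2 := by linarith
  set ψ : ℝ → ℝ := fun t => φ t - C / (b - 1) * (r₀ + t) ^ (1 - b) with hψ
  have hψd : ∀ t ∈ Ioi (0 : ℝ), HasDerivAt ψ (φ' t + C * (r₀ + t) ^ (-b)) t := by
    intro t ht
    have ht' : 0 < t := ht
    have h1 : HasDerivAt (fun t : ℝ => r₀ + t) 1 t := (hasDerivAt_id t).const_add r₀
    have h2 := h1.rpow_const (p := 1 - b) (Or.inl (by positivity))
    have h3 := (hd t ht).sub (h2.const_mul (C / (b - 1)))
    refine h3.congr_deriv ?_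
    rw [show 1 - b - 1 = -b by ring]
    field_simp
    ring
  have hanti : AntitoneOn ψ (Ioi 0) := by
    refine antitoneOn_of_deriv_nonpos (convex_Ioi 0)
      (fun t ht => (hψd t ht).continuousAt.continuousWithinAt) ?_ ?_
    · intro t ht
      rw [interior_Ioi] at ht
      exact (hψd t ht).differentiableAt.differentiableWithinAt
    · intro t ht
      rw [interior_Ioi] at ht
      rw [(hψd t ht).deriv]
      have h := hR t ht
      have h' : 0 ≤ (m t) ^ 2 / ((n : ℝ) - 1) := by positivity
      rw [neg_div] at h
      linarith
  set ε := r₀ / (b - 2) with hε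
  have hε0 : 0 < ε := by positivity
  have hlim : Filter.Tendsto (fun T : ℝ => -a - C / (b - 1) * (r₀ + T) ^ (1 - b))
      Filter.atTop (nhds (-a - C / (b - 1) * 0)) := by
    have h1 := tendsto_rpow_neg_atTop hb1
    have h2 : Filter.Tendsto (fun T : ℝ => r₀ + T) Filter.atTop Filter.atTop :=
      Filter.tendsto_atTop_add_const_left _ _ Filter.tendsto_id
    have h3 := h1.comp h2
    rw [neg_sub] at h3
    exact tendsto_const_nhds.sub (h3.const_mul _)
  have hle : -a - C / (b - 1) * 0 ≤ ψ ε := by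
    refine le_of_tendsto hlim ?_
    filter_upwards [Filter.eventually_ge_atTop ε] with T hT
    have hT0 : 0 < T := lt_of_lt_of_le hε0 hT
    have h1 : ψ T ≤ ψ ε := hanti hε0 hT0 hT
    have h2 := (hB T hT0).1
    have h3 : ψ T = φ T - C / (b - 1) * (r₀ + T) ^ (1 - b) := rfl
    linarith
  have hub := (hB ε hε0).2
  have hψε : ψ ε = φ ε - C / (b - 1) * (r₀ + ε) ^ (1 - b) := rfl
  have hkey : C / (b - 1) * (r₀ + ε) ^ (1 - b) ≤ 2 * a + ((n : ℝ) - 1) / ε := by linarith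
  have hpos : 0 < (r₀ + ε) ^ (b - 1) := by positivity
  have hinv : (r₀ + ε) ^ (1 - b) = ((r₀ + ε) ^ (b - 1))⁻¹ := by
    rw [← Real.rpow_neg (by positivity), neg_sub]
  rw [hinv, ← div_eq_mul_inv, div_div, div_le_iff₀ (by positivity)] at hkey
  have hsum : r₀ + ε = r₀ * (b - 1) / (b - 2) := by
    rw [hε]; field_simp; ring
  have hr : r₀ ^ (b - 1) = r₀ ^ (b - 2) * r₀ := by
    rw [← Real.rpow_add_one hr₀.ne']; congr 1; ring
  have hbb : (b - 1) ^ b = (b - 1) ^ (b - 1) * (b - 1) := by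
    rw [← Real.rpow_add_one hb1.ne']; congr 1; ring
  have hp2 : 0 < (b - 2) ^ (b - 1) := by positivity
  rw [hsum, Real.div_rpow (by positivity) hb2.le, Real.mul_rpow hr₀.le hb1.le, hr, hε] at hkey
  rw [hbb] at hC
  refine absurd (hC.trans_le hkey) (not_lt.mpr (le_of_eq ?_))
  field_simp
end

section
/- Let n ≥ 2 be a natural number, a ≥ 0, and let ε, r₀ be positive real numbers, 1 < b ≤ 2, and let C be a real number with C > (2a + (n−1)/ε)·(b−1)·(r₀+ε)^{b−1}. Then there do not exist functions m, φ : ℝ → ℝ such that φ is differentiable on [ε, ∞) with φ'(t) ≤ −m(t)²/(n−1) − C·(r₀+t)^{−b} for all t ≥ ε, φ(t) ≥ −a for all t ≥ ε, and φ(ε) ≤ (n−1)/ε + a. -/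
open MeasureTheory Set

/-- Analytic core of Corollary 1.8 for `1 < b ≤ 2`: the Riccati inequality with
`h(t) = (r₀+t)^{−b}` and the comparison bounds under `∂_t f ≥ −a` contradict
`C > (2a + (n−1)/ε)·(b−1)·(r₀+ε)^{b−1}`. -/
theorem stmt_6 (n : ℕ) (hn : 2 ≤ n) (a ε r₀ b C : ℝ) (ha : 0 ≤ a) (hε : 0 < ε)
    (hr₀ : 0 < r₀) (hb1 : 1 < b) (hb2 : b ≤ 2)
    (hC : (2 * a + ((n : ℝ) - 1) / ε) * (b - 1) * (r₀ + ε) ^ (b - 1) < C) :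
    ¬ ∃ m φ φ' : ℝ → ℝ,
      (∀ t ∈ Ici ε, HasDerivWithinAt φ (φ' t) (Ici ε) t) ∧
      (∀ t, ε ≤ t → φ' t ≤ -(m t) ^ 2 / ((n : ℝ) - 1) - C * (r₀ + t) ^ (-b)) ∧
      (∀ t, ε ≤ t → -a ≤ φ t) ∧
      φ ε ≤ ((n : ℝ) - 1) / ε + a := by
  rintro ⟨m, φ, φ', hd, hle, hlow, hinit⟩
  have hn1 : (0 : ℝ) < (n : ℝ) - 1 := by
    have : (2 : ℝ) ≤ n := by exact_mod_cast hn
    linarith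
  have hb : 0 < b - 1 := by linarith
  have hderiv : ∀ t ∈ Ici ε, HasDerivWithinAt
      (fun t => φ t - C / (b - 1) * (r₀ + t) ^ (-(b - 1)))
      (φ' t + C * (r₀ + t) ^ (-b)) (Ici ε) t := by
    intro t ht
    have ht' : ε ≤ t := ht
    have hpos : r₀ + t ≠ 0 := by linarith
    have h1 : HasDerivAt (fun t : ℝ => r₀ + t) 1 t := (hasDerivAt_id t).const_add r₀
    have h2 := (h1.rpow_const (p := -(b - 1)) (Or.inl hpos)).const_mul (C / (b - 1))
    have h3 := (hd t ht).sub h2.hasDerivWithinAt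
    refine h3.congr_deriv ?_
    have : -(b - 1) - 1 = -b := by ring
    rw [this]
    field_simp
    ring
  have hanti : AntitoneOn (fun t => φ t - C / (b - 1) * (r₀ + t) ^ (-(b - 1))) (Ici ε) := by
    apply antitoneOn_of_hasDerivWithinAt_nonpos (convex_Ici ε)
      (f' := fun t => φ' t + C * (r₀ + t) ^ (-b))
    · exact fun t ht => (hderiv t ht).continuousWithinAt
    · intro t ht
      exact (hderiv t (interior_subset ht)).mono interior_subset
    · intro t ht
      have h := hle t (interior_subset ht)
      have h0 : 0 ≤ (m t) ^ 2 / ((n : ℝ) - 1) := by positivity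
      rw [neg_div] at h
      show φ' t + C * (r₀ + t) ^ (-b) ≤ 0
      linarith
  have hlim : Filter.Tendsto (fun t : ℝ => -a - C / (b - 1) * (r₀ + t) ^ (-(b - 1)))
      Filter.atTop (nhds (-a - C / (b - 1) * 0)) := by
    refine Filter.Tendsto.const_sub _ (Filter.Tendsto.const_mul _ ?_)
    exact (tendsto_rpow_neg_atTop hb).comp
      (Filter.tendsto_atTop_add_const_left _ r₀ Filter.tendsto_id)
  have hfin : -a - C / (b - 1) * 0 ≤
      φ ε - C / (b - 1) * (r₀ + ε) ^ (-(b - 1)) := by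
    refine le_of_tendsto hlim ?_
    filter_upwards [Filter.eventually_ge_atTop ε] with t ht
    have h1 := hanti (mem_Ici.2 le_rfl) (mem_Ici.2 ht) ht
    have h2 := hlow t ht
    simp only at h1
    linarith
  have hP : 0 < (r₀ + ε) ^ (b - 1) := by positivity
  rw [Real.rpow_neg (by positivity)] at hfin
  have hkey : 2 * a + ((n : ℝ) - 1) / ε < C / (b - 1) * ((r₀ + ε) ^ (b - 1))⁻¹ := by
    rw [← div_eq_mul_inv, lt_div_iff₀ hP, lt_div_iff₀ hb]
    linarith
  linarith
end

section
/- Let n ≥ 2 be a natural number, k > 0 a real number, r₀ > 0, b > 2, and let C be a real number with C > (n+k−1)·(b−1)^b/(b−2)^{b−2}·r₀^{b−2}. Then there does not exist a function φ : ℝ → ℝ that is differentiable on (0, ∞) with φ'(t) ≤ −φ(t)²/(n+k−1) − C·(r₀+t)^{−b} for all t > 0, and 0 ≤ φ(t) ≤ (n+k−1)/t for all t > 0. -/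
open MeasureTheory Set

/-- Analytic core of Corollary 1.12 for `b > 2`: the Riccati inequality with
`h(t) = (r₀+t)^{−b}` on `(0, ∞)` and the bounds `0 ≤ φ(t) ≤ (n+k−1)/t` contradict
`C > (n+k−1)·(b−1)^b/(b−2)^{b−2}·r₀^{b−2}`. -/
theorem stmt_7 (n : ℕ) (hn : 2 ≤ n) (k r₀ b C : ℝ) (hk : 0 < k) (hr₀ : 0 < r₀) (hb : 2 < b)
    (hC : ((n : ℝ) + k - 1) * (b - 1) ^ b / (b - 2) ^ (b - 2) * r₀ ^ (b - 2) < C) :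
    ¬ ∃ φ φ' : ℝ → ℝ,
      (∀ t ∈ Ioi (0 : ℝ), HasDerivAt φ (φ' t) t) ∧
      (∀ t, 0 < t → φ' t ≤ -(φ t) ^ 2 / ((n : ℝ) + k - 1) - C * (r₀ + t) ^ (-b)) ∧
      (∀ t, 0 < t → 0 ≤ φ t ∧ φ t ≤ ((n : ℝ) + k - 1) / t) := by
  rintro ⟨φ, φ', hd, hR, hB⟩
  have hn' : (2 : ℝ) ≤ n := by exact_mod_cast hn
  obtain ⟨m, hm⟩ : ∃ m : ℝ, m = (n : ℝ) + k - 1 := ⟨_, rfl⟩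
  rw [← hm] at hC hR hB
  have hm0 : 0 < m := by linarith
  have hb1 : 0 < b - 1 := by linarith
  have hb2 : 0 < b - 2 := by linarith
  have hψ : ∀ t ∈ Ioi (0 : ℝ), HasDerivAt (fun t => φ t - C / (b - 1) * (r₀ + t) ^ (1 - b))
      (φ' t + C * (r₀ + t) ^ (-b)) t := by
    intro t ht
    have ht0 : 0 < t := ht
    have h1 : HasDerivAt (fun t : ℝ => r₀ + t) 1 t := (hasDerivAt_id t).const_add r₀
    have h2 := h1.rpow_const (p := 1 - b) (Or.inl (by positivity))
    have h3 := (hd t ht).sub (h2.const_mul (C / (b - 1)))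
    refine HasDerivAt.congr_deriv h3 ?_
    rw [show 1 - b - 1 = -b by ring]
    field_simp
    ring
  have hanti : AntitoneOn (fun t => φ t - C / (b - 1) * (r₀ + t) ^ (1 - b)) (Ioi (0 : ℝ)) := by
    apply antitoneOn_of_deriv_nonpos (convex_Ioi 0)
    · exact fun t ht => (hψ t ht).continuousAt.continuousWithinAt
    · rw [interior_Ioi]
      exact fun t ht => (hψ t ht).differentiableAt.differentiableWithinAt
    · rw [interior_Ioi]
      intro t ht
      rw [(hψ t ht).deriv]
      have h1 := hR t ht
      have h2 : 0 ≤ (φ t) ^ 2 / m := by positivity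
      rw [neg_div] at h1
      linarith
  have hε : 0 < r₀ / (b - 2) := by positivity
  have hlim : Filter.Tendsto (fun t : ℝ => -(C / (b - 1) * (r₀ + t) ^ (1 - b))) Filter.atTop
      (nhds 0) := by
    have h1 : Filter.Tendsto (fun t : ℝ => r₀ + t) Filter.atTop Filter.atTop :=
      Filter.tendsto_atTop_add_const_left _ _ Filter.tendsto_id
    have h2 := ((tendsto_rpow_neg_atTop hb1).comp h1).const_mul (C / (b - 1))
    simpa [Function.comp_def] using h2.neg
  have hge : 0 ≤ φ (r₀ / (b - 2)) - C / (b - 1) * (r₀ + r₀ / (b - 2)) ^ (1 - b) := by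
    refine le_of_tendsto hlim ?_
    filter_upwards [Filter.eventually_ge_atTop (r₀ / (b - 2))] with t ht
    have ht0 : 0 < t := hε.trans_le ht
    have h1 := hanti (mem_Ioi.2 hε) (mem_Ioi.2 ht0) ht
    have h2 := (hB t ht0).1
    simp only at h1
    linarith
  have hup := (hB _ hε).2
  have hs : r₀ + r₀ / (b - 2) = r₀ * (b - 1) / (b - 2) := by field_simp; ring
  have hle : C / (b - 1) * (r₀ * (b - 1) / (b - 2)) ^ (1 - b) ≤ m / (r₀ / (b - 2)) := by
    rw [← hs]; linarith
  have hpos : 0 < (r₀ * (b - 1) / (b - 2)) ^ (b - 1) := by positivity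
  rw [show 1 - b = -(b - 1) by ring, Real.rpow_neg (by positivity), ← div_eq_mul_inv,
    div_le_iff₀ hpos, div_le_iff₀ hb1] at hle
  refine absurd hC (not_lt.2 (hle.trans (le_of_eq ?_)))
  rw [Real.div_rpow (by positivity) hb2.le, Real.mul_rpow hr₀.le hb1.le]
  have e1 : r₀ ^ (b - 1) = r₀ ^ (b - 2) * r₀ := by
    rw [← Real.rpow_add_one hr₀.ne']; congr 1; ring
  have e2 : (b - 2) ^ (b - 1) = (b - 2) ^ (b - 2) * (b - 2) := by
    rw [← Real.rpow_add_one hb2.ne']; congr 1; ring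
  have e3 : (b - 1) ^ b = (b - 1) ^ (b - 1) * (b - 1) := by
    rw [← Real.rpow_add_one hb1.ne']; congr 1; ring
  rw [e1, e2, e3]
  have p1 : (b - 2) ^ (b - 2) ≠ 0 := by positivity
  generalize (b - 2) ^ (b - 2) = X at *
  generalize (b - 1) ^ (b - 1) = Y at *
  generalize r₀ ^ (b - 2) = Z at *
  field_simp
end

section
/- Let n ≥ 2 be a natural number, k > 0 a real number, and let ε, r₀ be positive real numbers, 1 < b ≤ 2, and let C be a real number with C > ((n+k−1)/ε)·(b−1)·(r₀+ε)^{b−1}. Then there does not exist a function φ : ℝ → ℝ that is differentiable on [ε, ∞) with φ'(t) ≤ −φ(t)²/(n+k−1) − C·(r₀+t)^{−b} for all t ≥ ε, φ(t) ≥ 0 for all t ≥ ε, and φ(ε) ≤ (n+k−1)/ε. -/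
open MeasureTheory Set

/-- Analytic core of Corollary 1.12 for `1 < b ≤ 2`: the Riccati inequality with
`h(t) = (r₀+t)^{−b}` and the comparison bounds contradict
`C > ((n+k−1)/ε)·(b−1)·(r₀+ε)^{b−1}`. -/
theorem stmt_8 (n : ℕ) (hn : 2 ≤ n) (k ε r₀ b C : ℝ) (hk : 0 < k) (hε : 0 < ε)
    (hr₀ : 0 < r₀) (hb1 : 1 < b) (hb2 : b ≤ 2)
    (hC : (((n : ℝ) + k - 1) / ε) * (b - 1) * (r₀ + ε) ^ (b - 1) < C) :
    ¬ ∃ φ φ' : ℝ → ℝ,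
      (∀ t ∈ Ici ε, HasDerivWithinAt φ (φ' t) (Ici ε) t) ∧
      (∀ t, ε ≤ t → φ' t ≤ -(φ t) ^ 2 / ((n : ℝ) + k - 1) - C * (r₀ + t) ^ (-b)) ∧
      (∀ t, ε ≤ t → 0 ≤ φ t) ∧
      φ ε ≤ ((n : ℝ) + k - 1) / ε := by
  rintro ⟨φ, φ', hd, hineq, hpos, hle⟩
  have hn' : (2 : ℝ) ≤ n := by exact_mod_cast hn
  have hN : 0 < (n : ℝ) + k - 1 := by linarith
  have hb : 0 < b - 1 := by linarith
  have hG : ∀ t ∈ Ici ε, HasDerivWithinAt (fun t => φ t - C / (b - 1) * (r₀ + t) ^ (1 - b))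
      (φ' t + C * (r₀ + t) ^ (-b)) (Ici ε) t := by
    intro t ht
    have ht' : ε ≤ t := ht
    have hp : 0 < r₀ + t := by linarith
    have h1 : HasDerivAt (fun t : ℝ => (r₀ + t) ^ (1 - b))
        (1 * (1 - b) * (r₀ + t) ^ (1 - b - 1)) t :=
      ((hasDerivAt_id t).const_add r₀).rpow_const (Or.inl hp.ne')
    have h2 := (hd t ht).sub ((h1.const_mul (C / (b - 1))).hasDerivWithinAt (s := Ici ε))
    have e : (1 : ℝ) - b - 1 = -b := by ring
    have e2 : φ' t - C / (b - 1) * (1 * (1 - b) * (r₀ + t) ^ (1 - b - 1))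
        = φ' t + C * (r₀ + t) ^ (-b) := by
      rw [e]
      field_simp
      ring
    rw [e2] at h2
    exact h2
  have hanti : AntitoneOn (fun t => φ t - C / (b - 1) * (r₀ + t) ^ (1 - b)) (Ici ε) := by
    apply antitoneOn_of_hasDerivWithinAt_nonpos (f' := fun t => φ' t + C * (r₀ + t) ^ (-b))
      (convex_Ici ε)
    · exact fun t ht => (hG t ht).continuousWithinAt
    · exact fun t ht => (hG t (interior_subset ht)).mono interior_subset
    · intro t ht
      have h := hineq t (interior_subset ht)
      have h3 : 0 ≤ (φ t) ^ 2 / ((n : ℝ) + k - 1) := by positivity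
      rw [neg_div] at h
      linarith
  have hlim : Filter.Tendsto (fun t : ℝ => -(C / (b - 1) * (r₀ + t) ^ (1 - b)))
      Filter.atTop (nhds 0) := by
    have h1 := (tendsto_rpow_neg_atTop hb).comp
      (Filter.tendsto_atTop_add_const_left Filter.atTop r₀ Filter.tendsto_id)
    have h2 := (h1.const_mul (C / (b - 1))).neg
    simpa [Function.comp_def] using h2
  have hge : 0 ≤ φ ε - C / (b - 1) * (r₀ + ε) ^ (1 - b) := by
    apply le_of_tendsto hlim
    filter_upwards [Filter.eventually_ge_atTop ε] with t ht
    have h1 := hanti (self_mem_Ici : ε ∈ Ici ε) (ht : t ∈ Ici ε) ht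
    have h2 := hpos t ht
    simp only at h1
    linarith
  have hp : 0 < r₀ + ε := by linarith
  have hq : 0 < (r₀ + ε) ^ (b - 1) := Real.rpow_pos_of_pos hp _
  have e : (1 : ℝ) - b = -(b - 1) := by ring
  rw [e, Real.rpow_neg hp.le] at hge
  have h4 : ((n : ℝ) + k - 1) / ε < C / (b - 1) * ((r₀ + ε) ^ (b - 1))⁻¹ := by
    rw [← div_eq_mul_inv, div_div, lt_div_iff₀ (by positivity), ← mul_assoc]
    exact hC
  linarith
end

section
/- Let n ≥ 2 be a natural number, H a real number, δ > 0 and t₀ > 0. Let sn : ℝ → ℝ be twice differentiable with sn''(t) = −H·sn(t) for all t, sn(0) = 0 and sn'(0) = 1, and assume sn(t) > 0 for all t ∈ (0, t₀] and that the function t ↦ sn(t)² has nonnegative first and second derivatives at every t ∈ [0, t₀]. Let f : ℝ → ℝ be twice continuously differentiable with |f(t)| ≤ δ(t+1) for all t ∈ [0, t₀]. Let m : ℝ → ℝ be differentiable on (0, t₀] with m'(t) ≤ −m(t)²/(n−1) − (n−1)H + f''(t) for all t ∈ (0, t₀], and suppose sn(t)²·m(t) → 0 as t → 0⁺. Then for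 every t ∈ (0, t₀], m(t) − f'(t) ≤ (1 + 4δ(t+1)/(n−1))·(n−1)·sn'(t)/sn(t). -/
open Set Filter

/-- Analytic content of Theorem 2.1 (f-mean curvature comparison under `|f| ≤ δ(t+1)`):
if `m` satisfies the Riccati inequality `m' ≤ −m²/(n−1) − (n−1)H + f''` with the model
solution `sn` of `sn'' + H sn = 0`, `sn(0) = 0`, `sn'(0) = 1`, and `sn²` is monotone and
convex on `[0, t₀]`, then `m_f = m − f' ≤ (1 + 4δ(t+1)/(n−1))·(n−1)·sn'/sn`. -/
theorem stmt_13 (n : ℕ) (hn : 2 ≤ n) (H δ t₀ : ℝ) (hδ : 0 < δ) (ht₀ : 0 < t₀)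
    (sn sn' : ℝ → ℝ)
    (hsn1 : ∀ t, HasDerivAt sn (sn' t) t)
    (hsn2 : ∀ t, HasDerivAt sn' (-(H * sn t)) t)
    (hsn0 : sn 0 = 0) (hsn'0 : sn' 0 = 1)
    (hsnpos : ∀ t ∈ Ioc 0 t₀, 0 < sn t)
    (hsq1 : ∀ t ∈ Icc 0 t₀, 0 ≤ deriv (fun s => sn s ^ 2) t)
    (hsq2 : ∀ t ∈ Icc 0 t₀, 0 ≤ deriv (deriv (fun s => sn s ^ 2)) t)
    (f : ℝ → ℝ) (hf : ContDiff ℝ 2 f)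
    (hfb : ∀ t ∈ Icc 0 t₀, |f t| ≤ δ * (t + 1))
    (m m' : ℝ → ℝ)
    (hm : ∀ t ∈ Ioc 0 t₀, HasDerivWithinAt m (m' t) (Ioc 0 t₀) t)
    (hric : ∀ t ∈ Ioc 0 t₀,
      m' t ≤ -(m t) ^ 2 / ((n : ℝ) - 1) - ((n : ℝ) - 1) * H + deriv (deriv f) t)
    (hlim : Tendsto (fun t => sn t ^ 2 * m t) (nhdsWithin 0 (Ioi 0)) (nhds 0)) :
    ∀ t ∈ Ioc 0 t₀,
      m t - deriv f t
        ≤ (1 + 4 * δ * (t + 1) / ((n : ℝ) - 1)) * (((n : ℝ) - 1) * sn' t / sn t) := by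
  have hN : (0:ℝ) < (n:ℝ) - 1 := by
    have : (2:ℝ) ≤ n := by exact_mod_cast hn
    linarith
  have hg1 : ∀ t, HasDerivAt (fun s => sn s ^ 2) (2 * sn t * sn' t) t := by
    intro t
    have h := (hsn1 t).fun_pow 2
    refine h.congr_deriv ?_
    push_cast
    ring
  have hg1d : deriv (fun s => sn s ^ 2) = fun t => 2 * sn t * sn' t :=
    funext fun t => (hg1 t).deriv
  have hg2 : ∀ t, HasDerivAt (fun t => 2 * sn t * sn' t)
      (2 * sn' t ^ 2 - 2 * H * sn t ^ 2) t := by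
    intro t
    have h := ((hsn1 t).const_mul 2).fun_mul (hsn2 t)
    refine h.congr_deriv ?_
    ring
  have hg2d : ∀ t, deriv (deriv (fun s => sn s ^ 2)) t
      = 2 * sn' t ^ 2 - 2 * H * sn t ^ 2 := by
    intro t
    rw [hg1d]
    exact (hg2 t).deriv
  have hf1 : ∀ t, HasDerivAt f (deriv f t) t := fun t =>
    (hf.differentiable (by norm_num) t).hasDerivAt
  have hfc : ContDiff ℝ 1 (deriv f) := by
    have h : ContDiff ℝ (1 + 1) f := by
      convert hf using 1
      norm_num
    exact (contDiff_succ_iff_deriv.1 h).2.2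
  have hf2 : ∀ t, HasDerivAt (deriv f) (deriv (deriv f) t) t := fun t =>
    (hfc.differentiable (by norm_num) t).hasDerivAt
  obtain ⟨R, hR⟩ : ∃ R : ℝ → ℝ, R = fun t => -(((n:ℝ) - 1) / 2 * (2 * sn t * sn' t))
      - sn t ^ 2 * deriv f t + (2 * sn t * sn' t) * f t
      - δ * ((2 * sn t * sn' t) * (t + 1)) := ⟨_, rfl⟩
  have hRd : ∀ t, HasDerivAt R (-(((n:ℝ) - 1) / 2 * (2 * sn' t ^ 2 - 2 * H * sn t ^ 2))
      - (2 * sn t * sn' t * deriv f t + sn t ^ 2 * deriv (deriv f) t)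
      + ((2 * sn' t ^ 2 - 2 * H * sn t ^ 2) * f t + (2 * sn t * sn' t) * deriv f t)
      - δ * ((2 * sn' t ^ 2 - 2 * H * sn t ^ 2) * (t + 1) + (2 * sn t * sn' t) * 1)) t := by
    intro t
    rw [hR]
    exact ((((hg2 t).const_mul _).neg.sub ((hg1 t).mul (hf2 t))).add
      ((hg2 t).mul (hf1 t))).sub
      (((hg2 t).mul ((hasDerivAt_id t).add_const 1)).const_mul δ)
  have hR0 : R 0 = 0 := by
    rw [hR]
    simp [hsn0]
  have hPd : ∀ t ∈ Ioc 0 t₀, HasDerivWithinAt (fun t => sn t ^ 2 * m t + R t) _ (Ioc 0 t₀) t :=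
    fun t ht => ((hg1 t).hasDerivWithinAt.mul (hm t ht)).add (hRd t).hasDerivWithinAt
  have hanti : AntitoneOn (fun t => sn t ^ 2 * m t + R t) (Ioc 0 t₀) := by
    refine antitoneOn_of_hasDerivWithinAt_nonpos (convex_Ioc 0 t₀)
      (fun t ht => (hPd t ht).continuousWithinAt)
      (fun t ht => (hPd t (interior_subset ht)).mono interior_subset) ?_
    intro t ht
    have ht' : t ∈ Ioc 0 t₀ := interior_subset ht
    have htc : t ∈ Icc 0 t₀ := ⟨ht'.1.le, ht'.2⟩
    have h1 := hsq1 t htc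
    rw [hg1d] at h1
    have h2 := hsq2 t htc
    rw [hg2d] at h2
    have h3 := hric t ht'
    have h4 := (abs_le.1 (hfb t htc)).2
    have h5 := mul_le_mul_of_nonneg_left h3 (sq_nonneg (sn t))
    have h6 := mul_le_mul_of_nonneg_left h4 h2
    have h7 := mul_nonneg hδ.le h1
    have h8 : 2 * sn t * sn' t * m t - sn t ^ 2 * (m t ^ 2 / ((n:ℝ) - 1))
        - ((n:ℝ) - 1) * sn' t ^ 2 ≤ 0 := by
      have : 2 * sn t * sn' t * m t - sn t ^ 2 * (m t ^ 2 / ((n:ℝ) - 1))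
        - ((n:ℝ) - 1) * sn' t ^ 2
          = -((sn t * m t - ((n:ℝ) - 1) * sn' t) ^ 2 / ((n:ℝ) - 1)) := by
        field_simp
        ring
      rw [this]
      have := div_nonneg (sq_nonneg (sn t * m t - ((n:ℝ) - 1) * sn' t)) hN.le
      linarith
    rw [neg_div] at h5
    simp only at h1 h7 ⊢
    linarith
  have hlim2 : Tendsto (fun t => sn t ^ 2 * m t + R t) (nhdsWithin 0 (Ioi 0)) (nhds 0) := by
    have h := (hRd 0).continuousAt.tendsto.mono_left
      (nhdsWithin_le_nhds (s := Ioi (0:ℝ)))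
    rw [hR0] at h
    simpa using hlim.add h
  intro t ht
  have htc : t ∈ Icc 0 t₀ := ⟨ht.1.le, ht.2⟩
  have hP : sn t ^ 2 * m t + R t ≤ 0 := by
    refine ge_of_tendsto hlim2 ?_
    filter_upwards [Ioo_mem_nhdsGT ht.1] with s hs
    exact hanti ⟨hs.1, hs.2.le.trans ht.2⟩ ht hs.2.le
  have h1 := hsq1 t htc
  rw [hg1d] at h1
  have h4 := (abs_le.1 (hfb t htc)).1
  have h6 := mul_le_mul_of_nonneg_left h4 h1
  have hs := hsnpos t ht
  have heq : (1 + 4 * δ * (t + 1) / ((n : ℝ) - 1)) * (((n : ℝ) - 1) * sn' t / sn t)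
      = (((n:ℝ) - 1) + 4 * δ * (t + 1)) * (sn t * sn' t) / sn t ^ 2 := by
    field_simp
  rw [heq, le_div_iff₀ (by positivity)]
  rw [hR] at hP
  simp only at hP h6
  linarith
end

section
/- Let n ≥ 2 be a natural number, H a real number, a ≥ 0 and t₀ > 0. Let sn : ℝ → ℝ be twice differentiable with sn''(t) = −H·sn(t) for all t, sn(0) = 0 and sn'(0) = 1, and assume sn(t) > 0 for all t ∈ (0, t₀] and that the function t ↦ sn(t)² has nonnegative first derivative at every t ∈ [0, t₀]. Let f : ℝ → ℝ be twice continuously differentiable with f'(t) ≥ −a for all t ∈ [0, t₀]. Let m : ℝ → ℝ be differentiable on (0, t₀] with m'(t) ≤ −m(t)²/(n−1) − (n−1)H + f''(t) for all t ∈ (0, t₀], and suppose sn(t)²·m(t) → 0 as t → 0⁺. Then for every t ∈ (0, t₀], m(t) − f'(t) ≤ (n−1)·sn'(t)/sn(t) + a. -/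
open Set Filter

/-- Analytic content of Theorem 2.2 (Wei–Wylie's f-mean curvature comparison under
`∂_t f ≥ −a`): if `m` satisfies the Riccati inequality `m' ≤ −m²/(n−1) − (n−1)H + f''`
with the model solution `sn` of `sn'' + H sn = 0`, `sn(0) = 0`, `sn'(0) = 1`, and `sn²`
is monotone on `[0, t₀]`, then `m_f = m − f' ≤ (n−1)·sn'/sn + a`. -/
theorem stmt_14 (n : ℕ) (hn : 2 ≤ n) (H a t₀ : ℝ) (ha : 0 ≤ a) (ht₀ : 0 < t₀)
    (sn sn' : ℝ → ℝ)
    (hsn1 : ∀ t, HasDerivAt sn (sn' t) t)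
    (hsn2 : ∀ t, HasDerivAt sn' (-(H * sn t)) t)
    (hsn0 : sn 0 = 0) (hsn'0 : sn' 0 = 1)
    (hsnpos : ∀ t ∈ Ioc 0 t₀, 0 < sn t)
    (hsq1 : ∀ t ∈ Icc 0 t₀, 0 ≤ deriv (fun s => sn s ^ 2) t)
    (f : ℝ → ℝ) (hf : ContDiff ℝ 2 f)
    (hfb : ∀ t ∈ Icc 0 t₀, -a ≤ deriv f t)
    (m m' : ℝ → ℝ)
    (hm : ∀ t ∈ Ioc 0 t₀, HasDerivWithinAt m (m' t) (Ioc 0 t₀) t)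
    (hric : ∀ t ∈ Ioc 0 t₀,
      m' t ≤ -(m t) ^ 2 / ((n : ℝ) - 1) - ((n : ℝ) - 1) * H + deriv (deriv f) t)
    (hlim : Tendsto (fun t => sn t ^ 2 * m t) (nhdsWithin 0 (Ioi 0)) (nhds 0)) :
    ∀ t ∈ Ioc 0 t₀,
      m t - deriv f t ≤ ((n : ℝ) - 1) * sn' t / sn t + a := by
  have hN : (0 : ℝ) < (n : ℝ) - 1 := by
    have : (2 : ℝ) ≤ n := by exact_mod_cast hn
    linarith
  set N : ℝ := (n : ℝ) - 1 with hNdef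
  have hdf : ∀ t, HasDerivAt (deriv f) (deriv (deriv f) t) t := by
    intro t
    have h1 : ContDiff ℝ 1 (deriv f) := by
      have h2 : ContDiff ℝ (1 + 1) f := by
        rw [one_add_one_eq_two]; exact hf
      exact (contDiff_succ_iff_deriv.1 h2).2.2
    exact ((h1.differentiable one_ne_zero) t).hasDerivAt
  have hss : ∀ t ∈ Icc 0 t₀, 0 ≤ sn t * sn' t := by
    intro t ht
    have h1 := hsq1 t ht
    have h2 : deriv (fun s => sn s ^ 2) t = 2 * (sn t * sn' t) := by
      have h3 := ((hsn1 t).pow 2).deriv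
      have h4 : deriv (fun s => sn s ^ 2) t = _ := h3
      rw [h4]; push_cast; ring
    linarith
  let G : ℝ → ℝ := fun t => sn t ^ 2 * m t - (sn t ^ 2 * (deriv f t + a) + N * (sn t * sn' t))
  let G' : ℝ → ℝ := fun t => (2 * sn t * sn' t * m t + sn t ^ 2 * m' t) -
    ((2 * sn t * sn' t * (deriv f t + a) + sn t ^ 2 * deriv (deriv f) t)
      + N * (sn' t * sn' t + sn t * (-(H * sn t))))
  have hGd : ∀ t ∈ Ioc 0 t₀, HasDerivWithinAt G (G' t) (Ioc 0 t₀) t := by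
    intro t ht
    have hq : HasDerivAt (fun s => sn s ^ 2) (2 * sn t * sn' t) t := by
      have h3 := (hsn1 t).pow 2
      refine HasDerivAt.congr_deriv h3 ?_
      push_cast; ring
    exact (hq.hasDerivWithinAt.mul (hm t ht)).sub
      (((hq.mul ((hdf t).add_const a)).add
        (((hsn1 t).mul (hsn2 t)).const_mul N)).hasDerivWithinAt)
  have hG' : ∀ t ∈ Ioc 0 t₀, G' t ≤ 0 := by
    intro t ht
    have h1 := hric t ht
    have h2 : 0 ≤ sn t * sn' t * (deriv f t + a) :=
      mul_nonneg (hss t ⟨ht.1.le, ht.2⟩) (by linarith [hfb t ⟨ht.1.le, ht.2⟩])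
    have h3 := mul_le_mul_of_nonneg_left h1 (sq_nonneg (sn t))
    have h4 : 0 ≤ (sn t * m t - N * sn' t) ^ 2 / N := by positivity
    have h5 : 2 * sn t * sn' t * m t
        + sn t ^ 2 * (-(m t) ^ 2 / N - N * H + deriv (deriv f) t)
        = -((sn t * m t - N * sn' t) ^ 2 / N) + sn t ^ 2 * deriv (deriv f) t
        + N * (sn' t * sn' t + sn t * (-(H * sn t))) := by
      field_simp
      ring
    simp only [G']
    nlinarith
  have hanti : AntitoneOn G (Ioc 0 t₀) := by
    apply antitoneOn_of_hasDerivWithinAt_nonpos (f' := G') (convex_Ioc 0 t₀)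
    · exact fun t ht => (hGd t ht).continuousWithinAt
    · exact fun t ht => (hGd t (interior_subset ht)).mono interior_subset
    · exact fun t ht => hG' t (interior_subset ht)
  have hlimG : Tendsto G (nhdsWithin 0 (Ioi 0)) (nhds 0) := by
    have hc : Continuous (fun t => sn t ^ 2 * (deriv f t + a) + N * (sn t * sn' t)) := by
      have c1 : Continuous sn := continuous_iff_continuousAt.2 fun t => (hsn1 t).continuousAt
      have c2 : Continuous sn' := continuous_iff_continuousAt.2 fun t => (hsn2 t).continuousAt
      have c3 : Continuous (deriv f) := continuous_iff_continuousAt.2 fun t => (hdf t).continuousAt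
      fun_prop
    have h1 := hlim.sub ((hc.tendsto 0).mono_left (nhdsWithin_le_nhds (s := Ioi 0)))
    simpa [hsn0] using h1
  intro t ht
  have hGt : G t ≤ 0 := by
    refine ge_of_tendsto hlimG ?_
    filter_upwards [Ioc_mem_nhdsGT ht.1] with s hs
    exact hanti ⟨hs.1, hs.2.trans ht.2⟩ ht hs.2
  have hp := hsnpos t ht
  have h6 : sn t * (m t - deriv f t - a) ≤ N * sn' t := by
    simp only [G] at hGt
    by_contra hcon
    have := mul_pos hp (sub_pos.2 (not_le.1 hcon))
    nlinarith
  have h7 : m t - deriv f t - a ≤ N * sn' t / sn t := by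
    rw [le_div_iff₀ hp]; linarith
  linarith
end

section
/- Let n ≥ 2 be a natural number and let C > 0 and α > 1 be real numbers. Then there do not exist a continuous function m : ℝ → ℝ and a function g : ℝ → ℝ with g(t) ≤ C·(1 − 1/t^α) for all t ≥ 1, such that −m(t) − (1/(n−1))·∫₁ᵗ m(s)² ds + g(t) → ∞ as t → ∞. -/
open MeasureTheory Filter

/-- Analytic core of the Ambrose-type Theorem 1.11: there is no continuous `m` and no
`g` with `g(t) ≤ C(1 − 1/t^α)` for `t ≥ 1` such that
`−m(t) − (1/(n−1))·∫₁ᵗ m² + g(t) → ∞` as `t → ∞`. -/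
theorem stmt_17 (n : ℕ) (hn : 2 ≤ n) (C α : ℝ) (hC : 0 < C) (hα : 1 < α) :
    ¬ ∃ m g : ℝ → ℝ, Continuous m ∧
      (∀ t, 1 ≤ t → g t ≤ C * (1 - 1 / t ^ α)) ∧
      Tendsto (fun t => -m t - (1 / ((n : ℝ) - 1)) * (∫ s in (1 : ℝ)..t, (m s) ^ 2) + g t)
        atTop atTop := by
  rintro ⟨m, g, hm, hg, hT⟩
  have hn' : (2 : ℝ) ≤ n := by exact_mod_cast hn
  obtain ⟨k, hk⟩ : ∃ k : ℝ, k = 1 / ((n : ℝ) - 1) := ⟨_, rfl⟩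
  have hk0 : 0 < k := by rw [hk]; apply one_div_pos.mpr; linarith
  rw [← hk] at hT
  obtain ⟨T, hT1, hTT⟩ : ∃ T : ℝ, 1 ≤ T ∧ ∀ t, T ≤ t →
      C + 1 ≤ -m t - k * (∫ s in (1 : ℝ)..t, (m s) ^ 2) + g t := by
    obtain ⟨T, h⟩ := eventually_atTop.mp (hT.eventually_ge_atTop (C + 1))
    exact ⟨max 1 T, le_max_left _ _, fun t ht => h t ((le_max_right _ _).trans ht)⟩
  let u : ℝ → ℝ := fun t => 1 + k * ∫ s in (1 : ℝ)..t, (m s) ^ 2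
  have hu1 : ∀ t, T ≤ t → 1 ≤ u t := by
    intro t ht
    have : 0 ≤ ∫ s in (1 : ℝ)..t, (m s) ^ 2 :=
      intervalIntegral.integral_nonneg (hT1.trans ht) (fun s _ => sq_nonneg _)
    have := mul_nonneg hk0.le this
    simp only [u]
    linarith
  have hum : ∀ t, T ≤ t → u t ≤ -m t := by
    intro t ht
    have h1 := hTT t ht
    have h2 := hg t (hT1.trans ht)
    have h0 : 0 ≤ 1 / t ^ α := one_div_nonneg.mpr (Real.rpow_nonneg (by linarith) _)
    have h3 := mul_nonneg hC.le h0
    simp only [u]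
    linarith
  have hud : ∀ t, HasDerivAt u (k * (m t) ^ 2) t := by
    intro t
    have hc : Continuous fun s => (m s) ^ 2 := hm.pow 2
    exact ((hc.integral_hasStrictDerivAt 1 t).hasDerivAt.const_mul k).const_add 1
  have hhd : ∀ t, T ≤ t →
      HasDerivAt (fun t => -(u t)⁻¹ - k * t) (k * (m t) ^ 2 / (u t) ^ 2 - k) t := by
    intro t ht
    have hne : u t ≠ 0 := by linarith [hu1 t ht]
    have := ((hud t).inv hne).neg.sub ((hasDerivAt_id t).const_mul k)
    refine this.congr_deriv ?_
    ring
  have hmono : MonotoneOn (fun t => -(u t)⁻¹ - k * t) (Set.Ici T) := by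
    apply monotoneOn_of_deriv_nonneg (convex_Ici T)
    · exact fun t ht => (hhd t ht).continuousAt.continuousWithinAt
    · intro t ht
      rw [interior_Ici] at ht
      exact (hhd t (le_of_lt ht)).differentiableAt.differentiableWithinAt
    · intro t ht
      rw [interior_Ici] at ht
      have ht' : T ≤ t := le_of_lt ht
      rw [(hhd t ht').deriv]
      have h1 := hu1 t ht'
      have h2 := hum t ht'
      have h4 : 0 < (u t) ^ 2 := by positivity
      rw [sub_nonneg, le_div_iff₀ h4]
      apply mul_le_mul_of_nonneg_left _ hk0.le
      nlinarith
  have hle : T ≤ T + 1 / k := by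
    have : 0 < 1 / k := one_div_pos.mpr hk0
    linarith
  have h := hmono (Set.mem_Ici.mpr le_rfl) (Set.mem_Ici.mpr hle) hle
  have h1 : (u T)⁻¹ ≤ 1 := inv_le_one_of_one_le₀ (hu1 T le_rfl)
  have h2 : 0 < (u (T + 1 / k))⁻¹ := inv_pos.mpr (by linarith [hu1 _ hle])
  have h3 : k * (T + 1 / k) = k * T + 1 := by field_simp
  simp only [h3] at h
  linarith
end
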